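/- Let a be a nonzero real constant, V ⊂ ℝ^{n−1} open, φ: V → ℝ real-analytic, and let Λ = {x ∈ ℝⁿ : x₁ = φ(x₂,…,x_n)} be the graph hypersurface. Then for every point p ∈ Λ there is an open neighborhood U of p and a real-analytic function v on U such that u(x) = −a·log(x₁ − φ(x₂,…,x_n)) + v(x) is a real-analytic solution of Δu = a⁻¹·|∇u|² on U ∩ {x₁ > φ(x₂,…,x_n)}; in particular u blows up along Λ ∩ U. -/

import Mathlib

open Real Filter

/-- partial derivative in the `i`-th variable of a function of `x ∈ ℝⁿ` -/
noncomputable def pxs {n : ℕ} (i : Fin n) (u : (Fin n → ℝ) → ℝ) (x : Fin n → ℝ) : ℝ :=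
  deriv (fun y => u (Function.update x i y)) (x i)

/-- `f` is represented on the ball of radius `s` around `p` by a power series whose weighted
`ℓ¹` norm at radius `s` is at most `M`. -/
def Cls {E : Type*} [NormedAddCommGroup E] [NormedSpace ℝ E] (p : E) (s M : ℝ) (f : E → ℝ) :
    Prop :=
  0 < s ∧ ∃ P : FormalMultilinearSeries ℝ E ℝ, (Summable fun m => ‖P m‖ * s ^ m) ∧
    ∑' m, ‖P m‖ * s ^ m ≤ M ∧
    ∀ y, ‖y‖ < s → HasSum (fun m => P m fun _ => y) (f (p + y))

section ClsLemmas

variable {E : Type*} [NormedAddCommGroup E] [NormedSpace ℝ E] {p : E} {s M : ℝ} {f g : E → ℝ}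

theorem term_le (P : FormalMultilinearSeries ℝ E ℝ) {y : E} (hy : ‖y‖ < s) (m : ℕ) :
    ‖P m fun _ => y‖ ≤ ‖P m‖ * s ^ m := by
  refine ((P m).le_opNorm _).trans ?_
  simp only [Finset.prod_const, Finset.card_univ, Fintype.card_fin]
  gcongr

theorem Cls.nonneg (h : Cls p s M f) : 0 ≤ M := by
  obtain ⟨hs, P, h1, h2, -⟩ := h
  exact (tsum_nonneg fun m => by positivity).trans h2

theorem Cls.mono (h : Cls p s M f) {s' M' : ℝ} (hs' : 0 < s') (hss : s' ≤ s) (hM : M ≤ M') :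
    Cls p s' M' f := by
  obtain ⟨hs, P, h1, h2, h3⟩ := h
  have hle : ∀ m, ‖P m‖ * s' ^ m ≤ ‖P m‖ * s ^ m := fun m => by gcongr
  have hsum : Summable fun m => ‖P m‖ * s' ^ m :=
    Summable.of_nonneg_of_le (fun m => by positivity) hle h1
  exact ⟨hs', P, hsum, ((hsum.tsum_le_tsum hle h1).trans h2).trans hM,
    fun y hy => h3 y (hy.trans_le hss)⟩

theorem Cls.abs_le (h : Cls p s M f) {x : E} (hx : ‖x - p‖ < s) : |f x| ≤ M := by
  obtain ⟨hs, P, h1, h2, h3⟩ := h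
  have h4 := h3 (x - p) hx
  rw [add_sub_cancel] at h4
  refine le_trans ?_ h2
  rw [← h4.tsum_eq]
  exact tsum_of_norm_bounded h1.hasSum (fun m => term_le P hx m)

theorem Cls.congr (h : Cls p s M f) (hfg : ∀ x, ‖x - p‖ < s → f x = g x) : Cls p s M g := by
  obtain ⟨hs, P, h1, h2, h3⟩ := h
  refine ⟨hs, P, h1, h2, fun y hy => ?_⟩
  rw [← hfg (p + y) (by simpa using hy)]
  exact h3 y hy

theorem Cls.hasFPS (h : Cls p s M f) : ∃ P : FormalMultilinearSeries ℝ E ℝ,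
    (Summable fun m => ‖P m‖ * s ^ m) ∧ ∑' m, ‖P m‖ * s ^ m ≤ M ∧
      HasFPowerSeriesOnBall f P p (ENNReal.ofReal s) := by
  obtain ⟨hs, P, h1, h2, h3⟩ := h
  refine ⟨P, h1, h2, ?_, by simpa using hs, ?_⟩
  · have : ((s.toNNReal : NNReal) : ℝ) = s := Real.coe_toNNReal _ hs.le
    exact P.le_radius_of_summable (by simpa [this] using h1)
  · intro y hy
    apply h3
    rw [Metric.eball_ofReal] at hy
    simpa using hy

theorem Cls.analyticAt (h : Cls p s M f) {x : E} (hx : ‖x - p‖ < s) : AnalyticAt ℝ f x := by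
  obtain ⟨P, -, -, h3⟩ := h.hasFPS
  apply h3.analyticAt_of_mem
  rw [Metric.eball_ofReal]
  simpa [dist_eq_norm] using hx

theorem AnalyticAt.exists_cls (h : AnalyticAt ℝ f p) : ∃ s M, Cls p s M f := by
  obtain ⟨P, r, h⟩ := h
  obtain ⟨s, hs0, hsr⟩ := ENNReal.lt_iff_exists_nnreal_btwn.1 h.r_pos
  have hs0' : (0 : ℝ) < s := by exact_mod_cast hs0
  refine ⟨s, _, hs0', P, P.summable_norm_mul_pow (hsr.trans_le h.r_le), le_rfl, ?_⟩
  intro y hy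
  apply h.hasSum
  apply Metric.eball_subset_eball hsr.le
  rw [Metric.eball_coe]
  simpa using hy

theorem Cls.small (h : Cls p s M f) (h0 : f p = 0) {s' : ℝ} (hs' : 0 < s') (hss : s' ≤ s) :
    Cls p s' (s' / s * M) f := by
  obtain ⟨hs, P, h1, h2, h3⟩ := h
  have hP0 : P 0 = 0 := by
    have h4 := h3 0 (by simpa using hs)
    rw [add_zero, h0] at h4
    have h5 : HasSum (fun m => P m fun _ => (0 : E)) (P 0 fun _ => 0) := by
      apply hasSum_single
      intro m hm
      have : NeZero m := ⟨hm⟩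
      exact (P m).map_coord_zero (0 : Fin m) rfl
    ext v
    rw [Subsingleton.elim v (fun _ => 0)]
    simpa using h5.unique h4
  have hle : ∀ m, ‖P m‖ * s' ^ m ≤ s' / s * (‖P m‖ * s ^ m) := fun m => by
    rcases m with _ | m
    · simp [hP0]
    · have : s' ^ m ≤ s ^ m := by gcongr
      calc ‖P (m+1)‖ * s' ^ (m+1) = s' * ‖P (m+1)‖ * s' ^ m := by ring
        _ ≤ s' * ‖P (m+1)‖ * s ^ m := by gcongr
        _ = _ := by rw [pow_succ s m]; field_simp
  have hsum : Summable fun m => ‖P m‖ * s' ^ m :=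
    Summable.of_nonneg_of_le (fun m => by positivity) hle (h1.mul_left _)
  refine ⟨hs', P, hsum, ?_, fun y hy => h3 y (hy.trans_le hss)⟩
  refine (hsum.tsum_le_tsum hle (h1.mul_left _)).trans ?_
  rw [tsum_mul_left]
  gcongr

theorem Cls.const (hs : 0 < s) (c : ℝ) : Cls p s |c| (fun _ => c) := by
  refine ⟨hs, constFormalMultilinearSeries ℝ E c, ?_, ?_, ?_⟩
  · apply summable_of_ne_finset_zero (s := {0})
    intro m hm
    simp only [Finset.mem_singleton] at hm
    rcases m with _ | m
    · exact absurd rfl hm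
    · simp [constFormalMultilinearSeries]
  · rw [tsum_eq_single 0]
    · simp [constFormalMultilinearSeries]
    · intro m hm
      rcases m with _ | m
      · exact absurd rfl hm
      · simp [constFormalMultilinearSeries]
  · intro y hy
    have : c = (constFormalMultilinearSeries ℝ E c) 0 fun _ => y := by
      simp [constFormalMultilinearSeries]
    conv => arg 2; rw [this]
    apply hasSum_single
    intro m hm
    rcases m with _ | m
    · exact absurd rfl hm
    · simp [constFormalMultilinearSeries]

theorem Cls.tsum {F : ℕ → E → ℝ} {B : ℕ → ℝ} (hs : 0 < s) (h : ∀ k, Cls p s (B k) (F k))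
    (hB : Summable B) : Cls p s (∑' k, B k) (fun x => ∑' k, F k x) := by
  choose _ P h1 h2 h3 using h
  have hsum : Summable (fun q : ℕ × ℕ => ‖P q.1 q.2‖ * s ^ q.2) := by
    rw [summable_prod_of_nonneg (fun q => by positivity)]
    exact ⟨h1, Summable.of_nonneg_of_le (fun k => tsum_nonneg fun m => by positivity) h2 hB⟩
  have hsum' := hsum.prod_symm
  have hcol : ∀ m, Summable fun k => ‖P k m‖ * s ^ m := fun m => hsum'.prod_factor m
  have hcol' : ∀ m, Summable fun k => ‖P k m‖ := fun m => by
    have := (hcol m).mul_right (s ^ m)⁻¹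
    refine this.congr fun k => ?_
    field_simp
  have hle : ∀ m, ‖∑' k, P k m‖ * s ^ m ≤ ∑' k, ‖P k m‖ * s ^ m := fun m => by
    rw [tsum_mul_right]
    gcongr
    exact norm_tsum_le_tsum_norm (hcol' m)
  have hS : Summable fun m => ∑' k, ‖P k m‖ * s ^ m := hsum'.prod
  have hN : Summable fun m => ‖∑' k, P k m‖ * s ^ m :=
    Summable.of_nonneg_of_le (fun m => by positivity) hle hS
  refine ⟨hs, fun m => ∑' k, P k m, hN, ?_, ?_⟩
  · refine (hN.tsum_le_tsum hle hS).trans ?_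
    refine (Summable.tsum_comm (f := fun k m => ‖P k m‖ * s ^ m) hsum).trans_le ?_
    exact (hsum.prod).tsum_le_tsum h2 hB
  · intro y hy
    have ht : Summable (fun q : ℕ × ℕ => P q.1 q.2 fun _ => y) :=
      Summable.of_norm_bounded hsum fun q => term_le (P q.1) hy q.2
    have e1 : ∑' q : ℕ × ℕ, (P q.1 q.2 fun _ => y) = ∑' k, F k (p + y) := by
      rw [ht.tsum_prod]
      exact tsum_congr fun k => (h3 k y hy).tsum_eq
    have e2 : ∀ m, (∑' k, P k m) (fun _ => y) = ∑' k, (P k m fun _ => y) := fun m =>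
      ((ContinuousMultilinearMap.apply ℝ (fun _ : Fin m => E) ℝ (fun _ => y)).map_tsum
        (hcol' m).of_norm)
    have hh := ht.prod_symm.hasSum.prod_fiberwise
      (fun m => (ht.prod_symm.prod_factor m).hasSum)
    simp only [e2]
    have e3 : ∑' k, F k (p + y) = ∑' q : ℕ × ℕ, (P q.swap.1 q.swap.2 fun _ => y) := by
      rw [← e1]
      exact ((Equiv.prodComm ℕ ℕ).tsum_eq (fun q : ℕ × ℕ => P q.1 q.2 fun _ => y)).symm
    rw [e3]
    exact hh

theorem Cls.add {M' : ℝ} (hf : Cls p s M f) (hg : Cls p s M' g) :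
    Cls p s (M + M') (fun x => f x + g x) := by
  obtain ⟨hs, P, h1, h2, h3⟩ := hf
  obtain ⟨-, Q, h1', h2', h3'⟩ := hg
  have hle : ∀ m, ‖P m + Q m‖ * s ^ m ≤ ‖P m‖ * s ^ m + ‖Q m‖ * s ^ m := fun m => by
    rw [← add_mul]; gcongr; exact norm_add_le _ _
  have hsum : Summable fun m => ‖P m + Q m‖ * s ^ m :=
    Summable.of_nonneg_of_le (fun m => by positivity) hle (h1.add h1')
  refine ⟨hs, fun m => P m + Q m, hsum, ?_, ?_⟩
  · refine (hsum.tsum_le_tsum hle (h1.add h1')).trans ?_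
    rw [h1.tsum_add h1']
    gcongr
  · intro y hy
    exact (h3 y hy).add (h3' y hy)

theorem Cls.smul (hf : Cls p s M f) (c : ℝ) : Cls p s (|c| * M) (fun x => c * f x) := by
  obtain ⟨hs, P, h1, h2, h3⟩ := hf
  have he : ∀ m, ‖c • P m‖ * s ^ m = |c| * (‖P m‖ * s ^ m) := fun m => by
    rw [norm_smul, Real.norm_eq_abs, mul_assoc]
  refine ⟨hs, fun m => c • P m, ?_, ?_, ?_⟩
  · simp only [he]; exact h1.mul_left _
  · simp only [he]; rw [tsum_mul_left]; gcongr
  · intro y hy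
    exact (h3 y hy).mul_left c

theorem Cls.sum {ι : Type*} (t : Finset ι) {F : ι → E → ℝ} {B : ι → ℝ} (hs : 0 < s)
    (h : ∀ i, Cls p s (B i) (F i)) : Cls p s (∑ i ∈ t, B i) (fun x => ∑ i ∈ t, F i x) := by
  classical
  induction t using Finset.induction_on with
  | empty => simpa using Cls.const (p := p) hs 0
  | insert i t hi ih =>
    simp only [Finset.sum_insert hi]
    exact (h i).add ih

/-- product of two multilinear maps -/
noncomputable def mulTerm {k l m : ℕ} (h : k + l = m)
    (A : ContinuousMultilinearMap ℝ (fun _ : Fin k => E) ℝ)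
    (B : ContinuousMultilinearMap ℝ (fun _ : Fin l => E) ℝ) :
    ContinuousMultilinearMap ℝ (fun _ : Fin m => E) ℝ :=
  MultilinearMap.mkContinuous
    (((LinearMap.mul' ℝ ℝ).compMultilinearMap
      (MultilinearMap.domCoprod A.toMultilinearMap B.toMultilinearMap)).domDomCongr
        (finSumFinEquiv.trans (finCongr h))) (‖A‖ * ‖B‖) (by
      intro v
      subst h
      simp only [MultilinearMap.domDomCongr_apply, LinearMap.compMultilinearMap_apply,
        MultilinearMap.domCoprod_apply, LinearMap.mul'_apply, norm_mul, Fin.prod_univ_add]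
      have hA := A.le_opNorm (fun i => v (Fin.castAdd l i))
      have hB := B.le_opNorm (fun i => v (Fin.natAdd k i))
      calc _ ≤ (‖A‖ * ∏ i, ‖v (Fin.castAdd l i)‖) * (‖B‖ * ∏ i, ‖v (Fin.natAdd k i)‖) := by
            refine mul_le_mul hA hB (norm_nonneg _) (by positivity)
        _ = _ := by ring)

theorem mulTerm_norm {k l m : ℕ} (h : k + l = m)
    (A : ContinuousMultilinearMap ℝ (fun _ : Fin k => E) ℝ)
    (B : ContinuousMultilinearMap ℝ (fun _ : Fin l => E) ℝ) :
    ‖mulTerm h A B‖ ≤ ‖A‖ * ‖B‖ :=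
  MultilinearMap.mkContinuous_norm_le _ (by positivity) _

theorem mulTerm_apply {k l m : ℕ} (h : k + l = m)
    (A : ContinuousMultilinearMap ℝ (fun _ : Fin k => E) ℝ)
    (B : ContinuousMultilinearMap ℝ (fun _ : Fin l => E) ℝ) (y : E) :
    mulTerm h A B (fun _ => y) = A (fun _ => y) * B (fun _ => y) := by
  simp [mulTerm]

theorem Cls.mul {M' : ℝ} (hf : Cls p s M f) (hg : Cls p s M' g) :
    Cls p s (M * M') (fun x => f x * g x) := by
  have hM := hf.nonneg
  obtain ⟨hs, P, h1, h2, h3⟩ := hf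
  obtain ⟨-, Q, h1', h2', h3'⟩ := hg
  let R : FormalMultilinearSeries ℝ E ℝ := fun m =>
    ∑ kl ∈ (Finset.HasAntidiagonal.antidiagonal m).attach,
      mulTerm (Finset.HasAntidiagonal.mem_antidiagonal.1 kl.2) (P kl.1.1) (Q kl.1.2)
  have hle : ∀ m, ‖R m‖ * s ^ m ≤ ∑ kl ∈ Finset.HasAntidiagonal.antidiagonal m,
      (‖P kl.1‖ * s ^ kl.1) * (‖Q kl.2‖ * s ^ kl.2) := fun m => by
    rw [← Finset.sum_attach]
    have : ‖R m‖ ≤ ∑ kl ∈ (Finset.HasAntidiagonal.antidiagonal m).attach, ‖P kl.1.1‖ * ‖Q kl.1.2‖ :=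
      norm_sum_le_of_le _ fun kl _ => mulTerm_norm _ _ _
    calc ‖R m‖ * s ^ m ≤ (∑ kl ∈ (Finset.HasAntidiagonal.antidiagonal m).attach, ‖P kl.1.1‖ * ‖Q kl.1.2‖) * s ^ m := by
          gcongr
      _ = _ := by
          rw [Finset.sum_mul]
          refine Finset.sum_congr rfl fun kl _ => ?_
          have hkl : s ^ m = s ^ kl.1.1 * s ^ kl.1.2 := by
            rw [← pow_add, Finset.HasAntidiagonal.mem_antidiagonal.1 kl.2]
          rw [hkl]
          ring
  have n1 : Summable fun m => ‖‖P m‖ * s ^ m‖ := h1.norm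
  have n1' : Summable fun m => ‖‖Q m‖ * s ^ m‖ := h1'.norm
  have hS : Summable fun m => ∑ kl ∈ Finset.HasAntidiagonal.antidiagonal m,
      (‖P kl.1‖ * s ^ kl.1) * (‖Q kl.2‖ * s ^ kl.2) :=
    (summable_norm_sum_mul_antidiagonal_of_summable_norm n1 n1').of_norm
  have hN : Summable fun m => ‖R m‖ * s ^ m :=
    Summable.of_nonneg_of_le (fun m => by positivity) hle hS
  refine ⟨hs, R, hN, ?_, ?_⟩
  · refine (hN.tsum_le_tsum hle hS).trans ?_
    rw [← tsum_mul_tsum_eq_tsum_sum_antidiagonal_of_summable_norm n1 n1']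
    exact mul_le_mul h2 h2' (tsum_nonneg fun m => by positivity) hM
  · intro y hy
    have m1 : Summable fun m => ‖P m fun _ => y‖ :=
      Summable.of_nonneg_of_le (fun m => norm_nonneg _) (term_le P hy) h1
    have m1' : Summable fun m => ‖Q m fun _ => y‖ :=
      Summable.of_nonneg_of_le (fun m => norm_nonneg _) (term_le Q hy) h1'
    have hRy : ∀ m, (R m fun _ => y) = ∑ kl ∈ Finset.HasAntidiagonal.antidiagonal m,
        (P kl.1 fun _ => y) * (Q kl.2 fun _ => y) := fun m => by
      rw [← Finset.sum_attach]
      simp only [R, _root_.sum_apply, mulTerm_apply]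
    simp only [hRy]
    rw [← (h3 y hy).tsum_eq, ← (h3' y hy).tsum_eq,
      tsum_mul_tsum_eq_tsum_sum_antidiagonal_of_summable_norm m1 m1']
    exact (summable_norm_sum_mul_antidiagonal_of_summable_norm m1 m1').of_norm.hasSum

theorem Cls.pow (hf : Cls p s M f) (k : ℕ) : Cls p s (M ^ k) (fun x => f x ^ k) := by
  induction k with
  | zero => simpa using Cls.const (p := p) hf.1 1
  | succ k ih => simpa only [pow_succ] using ih.mul hf

theorem derivSeries_norm_le (P : FormalMultilinearSeries ℝ E ℝ) (m : ℕ) :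
    ‖P.derivSeries m‖ ≤ (m + 1) * ‖P (m + 1)‖ := by
  have h1 : ‖P.derivSeries m‖ ≤ ‖P.changeOriginSeries 1 m‖ := by
    refine (ContinuousLinearMap.norm_compContinuousMultilinearMap_le _ _).trans ?_
    refine mul_le_of_le_one_left (norm_nonneg _) ?_
    exact (continuousMultilinearCurryFin1 ℝ E ℝ).toLinearIsometry.norm_toContinuousLinearMap_le
  refine h1.trans ?_
  have h2 := P.nnnorm_changeOriginSeries_le_tsum 1 m
  rw [tsum_fintype, Finset.sum_const] at h2
  have h3 : (Finset.univ : Finset { s : Finset (Fin (1 + m)) // s.card = m }).card = m + 1 := by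
    rw [Finset.card_univ, Fintype.card_finset_len, Fintype.card_fin, add_comm 1 m,
      Nat.choose_succ_self_right]
  rw [h3, add_comm 1 m] at h2
  have h4 : ((‖P.changeOriginSeries 1 m‖₊ : NNReal) : ℝ) ≤ ((m+1) • ‖P (m+1)‖₊ : NNReal) := by
    exact_mod_cast h2
  simpa [nsmul_eq_mul] using h4

theorem pow_deriv_bound {s s' : ℝ} (hs : 0 < s) (hss : s < s') (m : ℕ) :
    (m + 1) * s ^ m * (s' - s) ≤ s' ^ (m + 1) := by
  induction m with
  | zero => simp; linarith
  | succ m ih =>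
    have h1 : s ^ (m+1) ≤ s' ^ (m+1) := by gcongr
    push_cast
    have h2 : ((m:ℝ) + 1 + 1) * s ^ (m + 1) * (s' - s) =
      s * ((m + 1) * s ^ m * (s' - s)) + s ^ (m+1) * (s' - s) := by ring
    rw [h2]
    calc _ ≤ s * s' ^ (m+1) + s' ^ (m+1) * (s' - s) := by
          gcongr
      _ = _ := by ring

theorem Cls.deriv {s' : ℝ} (hf : Cls p s' M f) (hs : 0 < s) (hss : s < s') {e : E}
    (he : ‖e‖ ≤ 1) : Cls p s (M / (s' - s)) (fun x => fderiv ℝ f x e) := by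
  obtain ⟨P, h1, h2, h3⟩ := hf.hasFPS
  have hd : 0 < s' - s := by linarith
  have h4 := h3.fderiv
  let ev : (E →L[ℝ] ℝ) →L[ℝ] ℝ := ContinuousLinearMap.apply ℝ ℝ e
  have hev : ‖ev‖ ≤ 1 := by
    refine ContinuousLinearMap.opNorm_le_bound _ zero_le_one fun L => ?_
    rw [one_mul]
    exact (L.le_opNorm e).trans (mul_le_of_le_one_right (norm_nonneg _) he)
  have hle : ∀ m, ‖ev.compFormalMultilinearSeries P.derivSeries m‖ * s ^ m ≤
      (‖P (m+1)‖ * s' ^ (m+1)) / (s' - s) := fun m => by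
    have a1 : ‖ev.compFormalMultilinearSeries P.derivSeries m‖ ≤ (m + 1) * ‖P (m + 1)‖ := by
      refine (ContinuousLinearMap.norm_compContinuousMultilinearMap_le _ _).trans ?_
      exact (mul_le_of_le_one_left (norm_nonneg _) hev).trans (derivSeries_norm_le P m)
    rw [le_div_iff₀ hd]
    have := pow_deriv_bound hs hss m
    calc _ ≤ (m + 1) * ‖P (m + 1)‖ * s ^ m * (s' - s) := by gcongr
      _ = ‖P (m + 1)‖ * ((m + 1) * s ^ m * (s' - s)) := by ring
      _ ≤ _ := by gcongr
  have hS1 : Summable fun m => ‖P (m+1)‖ * s' ^ (m+1) :=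
    (summable_nat_add_iff (f := fun m => ‖P m‖ * s' ^ m) 1).2 h1
  have hS : Summable fun m => (‖P (m+1)‖ * s' ^ (m+1)) / (s' - s) := hS1.div_const _
  have hN := Summable.of_nonneg_of_le (fun m => by positivity) hle hS
  refine ⟨hs, ev.compFormalMultilinearSeries P.derivSeries, hN, ?_, ?_⟩
  · refine (hN.tsum_le_tsum hle hS).trans ?_
    rw [tsum_div_const]
    gcongr
    refine le_trans ?_ h2
    rw [h1.tsum_eq_zero_add]
    have : 0 ≤ ‖P 0‖ * s' ^ 0 := by positivity
    linarith
  · intro y hy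
    have hy' : y ∈ Metric.eball (0 : E) (ENNReal.ofReal s') := by
      rw [Metric.eball_ofReal]
      simpa using hy.trans hss
    exact ev.hasSum (h4.hasSum hy')

end ClsLemmas

section CK

variable {E : Type*} [NormedAddCommGroup E] [NormedSpace ℝ E] {ι : Type*} [Fintype ι]

/-- directional derivative -/
noncomputable def Dd (e : E) (f : E → ℝ) (x : E) : ℝ := fderiv ℝ f x e

/-- sum of second derivatives in the directions `e i` -/
noncomputable def Lp (e : ι → E) (f : E → ℝ) (x : E) : ℝ := ∑ i, Dd (e i) (Dd (e i) f) x

/-- squared length of the gradient -/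
noncomputable def Gr (e : ι → E) (f : E → ℝ) (x : E) : ℝ := ∑ i, (Dd (e i) f x) ^ 2

/-- the coefficients of the expansion in powers of `τ` -/
noncomputable def cs (e : ι → E) (τ : E → ℝ) : ℕ → E → ℝ
  | 0 => fun _ => 0
  | 1 => fun _ => 1
  | k + 2 => fun x => (-(((k : ℝ) + 2) * (k + 1))⁻¹) * ((Gr e τ x)⁻¹ *
      (((k : ℝ) + 1) * (2 * ∑ i, Dd (e i) τ x * Dd (e i) (cs e τ (k + 1)) x
          + Lp e τ x * cs e τ (k + 1) x) + Lp e (cs e τ k) x))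

theorem one_add_pow_le (q : ℕ) : (((q : ℝ) + 2) / (q + 1)) ^ q ≤ 3 := by
  have hq : (0 : ℝ) < q + 1 := by positivity
  have h1 : ((q : ℝ) + 2) / (q + 1) ≤ Real.exp (1 / (q + 1)) := by
    have := Real.add_one_le_exp (1 / ((q : ℝ) + 1))
    refine le_trans (le_of_eq ?_) this
    field_simp
    ring
  calc (((q : ℝ) + 2) / (q + 1)) ^ q ≤ Real.exp (1 / (q + 1)) ^ q := by gcongr
    _ = Real.exp (q * (1 / (q + 1))) := by rw [Real.exp_nat_mul]
    _ ≤ Real.exp 1 := by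
        apply Real.exp_le_exp.2
        rw [mul_one_div, div_le_one hq]
        linarith
    _ ≤ 3 := Real.exp_one_lt_three.le

theorem nagumo {p e : E} (he : ‖e‖ ≤ 1) {f : E → ℝ} {R K : ℝ} {q : ℕ}
    (h : ∀ s, 0 < s → s < R → Cls p s (K * ((R - s)⁻¹) ^ q) f) :
    ∀ s, 0 < s → s < R → Cls p s (3 * (q + 2) * K * ((R - s)⁻¹) ^ (q + 1)) (Dd e f) := by
  intro s hs hsR
  have hd : 0 < R - s := by linarith
  have hq : (0 : ℝ) < q + 2 := by positivity
  set s' := s + (R - s) / (q + 2) with hs'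
  have h1 : s < s' := by
    have : 0 < (R - s) / (q + 2) := by positivity
    linarith
  have h2 : R - s' = (R - s) * ((q + 1) / (q + 2)) := by
    rw [hs']; field_simp; ring
  have h2' : 0 < R - s' := by rw [h2]; positivity
  have h3 := h s' (by linarith) (by linarith)
  have hK : 0 ≤ K := by
    have := h3.nonneg
    exact nonneg_of_mul_nonneg_left this (by positivity)
  refine (h3.deriv hs h1 he).mono hs le_rfl ?_
  have h4 : s' - s = (R - s) / (q + 2) := by rw [hs']; ring
  rw [h4, h2]
  have h5 : K * ((R - s) * (((q : ℝ) + 1) / (q + 2)))⁻¹ ^ q / ((R - s) / (q + 2)) =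
      (((q : ℝ) + 2) / (q + 1)) ^ q * ((q + 2) * K * (R - s)⁻¹ ^ (q + 1)) := by
    rw [mul_inv, inv_div, mul_pow, pow_succ]
    field_simp
  rw [h5]
  calc _ ≤ 3 * ((q + 2) * K * (R - s)⁻¹ ^ (q + 1)) := by
        gcongr
        exact one_add_pow_le q
    _ = _ := by ring

theorem arith_bound {N B A X : ℝ} (hN : 0 ≤ N) (hB : 0 ≤ B) (hX : 1 ≤ X)
    (hA : A = 12 * N * B ^ 2 + B ^ 2 + 27 * N * B + 1) (k : ℕ) :
    |(-(((k : ℝ) + 2) * (k + 1))⁻¹)| * (B * (|(k : ℝ) + 1| * (|2| * (N * (B *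
      (3 * (((k + 1 : ℕ) : ℝ) + 2) * A ^ (k + 1) * X ^ (k + 1 + 1)))) + B * (A ^ (k + 1) * X ^ (k + 1)))
      + N * (3 * (((k + 1 : ℕ) : ℝ) + 2) * (3 * (k + 2) * A ^ k) * X ^ (k + 1 + 1))))
      ≤ A ^ (k + 2) * X ^ (k + 2) := by
  have hA1 : 1 ≤ A := by rw [hA]; nlinarith [mul_nonneg hN hB, mul_nonneg hN (sq_nonneg B), sq_nonneg B]
  have hk : (0 : ℝ) ≤ k := by positivity
  rw [abs_neg, abs_of_pos (by positivity : (0:ℝ) < (((k : ℝ) + 2) * (k + 1))⁻¹),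
    abs_of_pos (by positivity : (0:ℝ) < (k : ℝ) + 1), abs_two, inv_mul_le_iff₀ (by positivity)]
  push_cast
  have hX0 : 0 < X := by linarith
  have hA0 : 0 < A := by linarith
  have e1 : X ^ (k + 1) ≤ X ^ (k + 2) := pow_le_pow_right₀ hX (by omega)
  have hNB : 0 ≤ N * B := mul_nonneg hN hB
  have t1 : ((k:ℝ) + 1) * (k + 3) ≤ 2 * ((k + 2) * (k + 1)) := by nlinarith
  have t2 : ((k:ℝ) + 1) ≤ ((k + 2) * (k + 1)) := by nlinarith
  have t3 : ((k:ℝ) + 3) * (k + 2) ≤ 3 * ((k + 2) * (k + 1)) := by nlinarith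
  set Z := ((k:ℝ) + 2) * (k + 1) with hZ
  have hZ0 : 0 < Z := by positivity
  have b1 : B * (((k:ℝ) + 1) * (2 * (N * (B * (3 * ((k:ℝ) + 1 + 2) * A ^ (k + 1) * X ^ (k + 1 + 1)))) ))
      ≤ 12 * N * B ^ 2 * (Z * (A ^ (k+1) * X ^ (k+2))) := by
    calc _ = 6 * (N * B ^ 2) * (A ^ (k+1) * X ^ (k+2)) * (((k:ℝ) + 1) * (k + 3)) := by ring
      _ ≤ 6 * (N * B ^ 2) * (A ^ (k+1) * X ^ (k+2)) * (2 * Z) := by gcongr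
      _ = _ := by ring
  have b2 : B * (((k:ℝ) + 1) * (B * (A ^ (k + 1) * X ^ (k + 1))))
      ≤ B ^ 2 * (Z * (A ^ (k+1) * X ^ (k+2))) := by
    calc _ = B ^ 2 * (((k:ℝ) + 1) * (A ^ (k + 1) * X ^ (k + 1))) := by ring
      _ ≤ _ := by gcongr
  have b3 : B * (N * (3 * (((k : ℝ) + 1) + 2) * (3 * (k + 2) * A ^ k) * X ^ (k + 1 + 1)))
      ≤ 27 * N * B * (Z * (A ^ (k+1) * X ^ (k+2))) := by
    calc _ = 9 * (N * B) * (A ^ k * X ^ (k+2)) * (((k:ℝ) + 3) * (k + 2)) := by ring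
      _ ≤ 9 * (N * B) * (A ^ (k+1) * X ^ (k+2)) * (3 * Z) := by
          gcongr
          omega
      _ = _ := by ring
  calc _ = B * (((k:ℝ) + 1) * (2 * (N * (B * (3 * ((k:ℝ) + 1 + 2) * A ^ (k + 1) * X ^ (k + 1 + 1)))) ))
        + B * (((k:ℝ) + 1) * (B * (A ^ (k + 1) * X ^ (k + 1))))
        + B * (N * (3 * (((k : ℝ) + 1) + 2) * (3 * (k + 2) * A ^ k) * X ^ (k + 1 + 1))) := by ring
    _ ≤ 12 * N * B ^ 2 * (Z * (A ^ (k+1) * X ^ (k+2))) + B ^ 2 * (Z * (A ^ (k+1) * X ^ (k+2)))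
        + 27 * N * B * (Z * (A ^ (k+1) * X ^ (k+2))) := by linarith
    _ = (12 * N * B ^ 2 + B ^ 2 + 27 * N * B) * (Z * (A ^ (k+1) * X ^ (k+2))) := by ring
    _ ≤ A * (Z * (A ^ (k+1) * X ^ (k+2))) := by
        gcongr
        linarith
    _ = _ := by ring

theorem cs_bound {p : E} {e : ι → E} (he : ∀ i, ‖e i‖ ≤ 1) {τ : E → ℝ} {R B A : ℝ}
    (hR : R ≤ 1) (hB : 0 ≤ B)
    (h1 : ∀ i, Cls p R B (Dd (e i) τ)) (h2 : Cls p R B (Lp e τ))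
    (h3 : Cls p R B (fun x => (Gr e τ x)⁻¹))
    (hA : A = 12 * (Fintype.card ι : ℝ) * B ^ 2 + B ^ 2 + 27 * (Fintype.card ι : ℝ) * B + 1)
    (k : ℕ) : ∀ s, 0 < s → s < R → Cls p s (A ^ k * ((R - s)⁻¹) ^ k) (cs e τ k) := by
  have hA1 : 1 ≤ A := by
    have : 0 ≤ 12 * (Fintype.card ι : ℝ) * B ^ 2 + B ^ 2 + 27 * (Fintype.card ι : ℝ) * B := by
      positivity
    linarith
  induction k using Nat.strong_induction_on with
  | _ k ih =>
  intro s hs hsR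
  have hX : 1 ≤ (R - s)⁻¹ := (one_le_inv₀ (by linarith)).2 (by linarith)
  rcases k with _ | _ | k
  · have := (Cls.const (p := p) hs 0).mono hs le_rfl (by simp : |(0:ℝ)| ≤ A ^ 0 * (R - s)⁻¹ ^ 0)
    simpa [cs] using this
  · have hle : |(1:ℝ)| ≤ A ^ 1 * (R - s)⁻¹ ^ 1 := by
      rw [abs_one, pow_one, pow_one]
      nlinarith
    have := (Cls.const (p := p) hs 1).mono hs le_rfl hle
    simpa [cs] using this
  · have i0 := ih k (by omega)
    have i1 := ih (k + 1) (by omega)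
    have d1 : ∀ i, _ := fun i => nagumo (he i) i1 s hs hsR
    have d2 : ∀ i, _ := fun i => nagumo (he i) (nagumo (he i) i0) s hs hsR
    have m1 : ∀ i, _ := fun i => ((h1 i).mono hs hsR.le le_rfl).mul (d1 i)
    have m2 := ((Cls.sum Finset.univ hs m1).smul 2).add
      ((h2.mono hs hsR.le le_rfl).mul (i1 s hs hsR))
    have m3 := (m2.smul ((k:ℝ) + 1)).add (Cls.sum Finset.univ hs d2)
    have m4 := ((h3.mono hs hsR.le le_rfl).mul m3).smul (-(((k : ℝ) + 2) * (k + 1))⁻¹)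
    have := m4.mono hs le_rfl (M' := A ^ (k + 2) * (R - s)⁻¹ ^ (k + 2)) (by
      refine le_trans (le_of_eq ?_) (arith_bound (N := Fintype.card ι) (by positivity) hB hX hA k)
      simp only [Finset.sum_const, nsmul_eq_mul, Finset.card_univ])
    refine this.congr fun x _ => ?_
    rw [cs]
    rfl

theorem Dd_analytic {e x : E} {f : E → ℝ} (hf : AnalyticAt ℝ f x) : AnalyticAt ℝ (Dd e f) x :=
  ((ContinuousLinearMap.apply ℝ ℝ e).analyticAt _).comp hf.fderiv

theorem Lp_analytic {e : ι → E} {x : E} {f : E → ℝ} (hf : AnalyticAt ℝ f x) :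
    AnalyticAt ℝ (Lp e f) x := by
  unfold Lp
  exact Finset.analyticAt_fun_sum _ fun i _ => Dd_analytic (Dd_analytic hf)

theorem Gr_analytic {e : ι → E} {x : E} {f : E → ℝ} (hf : AnalyticAt ℝ f x) :
    AnalyticAt ℝ (Gr e f) x := by
  unfold Gr
  exact Finset.analyticAt_fun_sum _ fun i _ => (Dd_analytic hf).pow 2

theorem Dd_congr {e x : E} {f g : E → ℝ} (h : f =ᶠ[nhds x] g) : Dd e f =ᶠ[nhds x] Dd e g := by
  filter_upwards [h.fderiv (𝕜 := ℝ)] with y hy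
  rw [Dd, Dd, hy]

theorem Lp_congr {e : ι → E} {x : E} {f g : E → ℝ} (h : f =ᶠ[nhds x] g) : Lp e f x = Lp e g x := by
  unfold Lp
  exact Finset.sum_congr rfl fun i _ => (Dd_congr (Dd_congr h)).eq_of_nhds

theorem Dd_add {e x : E} {f g : E → ℝ} (hf : AnalyticAt ℝ f x) (hg : AnalyticAt ℝ g x) :
    Dd e (fun y => f y + g y) =ᶠ[nhds x] fun y => Dd e f y + Dd e g y := by
  filter_upwards [hf.eventually_analyticAt, hg.eventually_analyticAt] with y h1 h2
  rw [Dd, fderiv_fun_add h1.differentiableAt h2.differentiableAt]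
  rfl

theorem Dd_mul {e x : E} {f g : E → ℝ} (hf : AnalyticAt ℝ f x) (hg : AnalyticAt ℝ g x) :
    Dd e (fun y => f y * g y) =ᶠ[nhds x] fun y => f y * Dd e g y + g y * Dd e f y := by
  filter_upwards [hf.eventually_analyticAt, hg.eventually_analyticAt] with y h1 h2
  rw [Dd, fderiv_fun_mul h1.differentiableAt h2.differentiableAt]
  rfl

theorem Dd_pow {e x : E} {f : E → ℝ} (hf : AnalyticAt ℝ f x) (k : ℕ) :
    Dd e (fun y => f y ^ (k + 1)) =ᶠ[nhds x] fun y => ((k : ℝ) + 1) * f y ^ k * Dd e f y := by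
  filter_upwards [hf.eventually_analyticAt] with y h1
  rw [Dd, fderiv_fun_pow _ h1.differentiableAt]
  simp [Dd]

theorem Dd_const (e x : E) (c : ℝ) : Dd e (fun _ : E => c) x = 0 := by
  simp [Dd]

theorem Lp_const (e : ι → E) (x : E) (c : ℝ) : Lp e (fun _ : E => c) x = 0 := by
  have : ∀ i, Dd (e i) (fun _ : E => c) = fun _ => 0 := fun i => funext fun y => Dd_const _ _ _
  simp [Lp, this, Dd_const]

theorem Lp_add {e : ι → E} {x : E} {f g : E → ℝ} (hf : AnalyticAt ℝ f x) (hg : AnalyticAt ℝ g x) :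
    Lp e (fun y => f y + g y) x = Lp e f x + Lp e g x := by
  unfold Lp
  rw [← Finset.sum_add_distrib]
  refine Finset.sum_congr rfl fun i _ => ?_
  rw [(Dd_congr (Dd_add hf hg)).eq_of_nhds,
    (Dd_add (Dd_analytic hf) (Dd_analytic hg)).eq_of_nhds]

theorem Dd_Dd_mul {e : E} {x : E} {f g : E → ℝ} (hf : AnalyticAt ℝ f x) (hg : AnalyticAt ℝ g x) :
    Dd e (Dd e (fun y => f y * g y)) x =
      f x * Dd e (Dd e g) x + 2 * (Dd e f x * Dd e g x) + g x * Dd e (Dd e f) x := by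
  rw [(Dd_congr (Dd_mul hf hg)).eq_of_nhds,
    (Dd_add (hf.fun_mul (Dd_analytic hg)) (hg.fun_mul (Dd_analytic hf))).eq_of_nhds,
    (Dd_mul hf (Dd_analytic hg)).eq_of_nhds, (Dd_mul hg (Dd_analytic hf)).eq_of_nhds]
  ring

theorem Dd_Dd_pow {e : E} {x : E} {f : E → ℝ} (hf : AnalyticAt ℝ f x) (k : ℕ) :
    Dd e (Dd e (fun y => f y ^ (k + 2))) x =
      ((k : ℝ) + 2) * (f x ^ (k + 1) * Dd e (Dd e f) x + (k + 1) * f x ^ k * (Dd e f x) ^ 2) := by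
  have h1 := Dd_pow (e := e) hf (k + 1)
  have h2 : AnalyticAt ℝ (fun y => (((k + 1 : ℕ) : ℝ) + 1) * f y ^ (k + 1)) x :=
    analyticAt_const.mul (hf.pow _)
  rw [(Dd_congr h1).eq_of_nhds, (Dd_mul h2 (Dd_analytic hf)).eq_of_nhds,
    (Dd_mul analyticAt_const (hf.fun_pow (k + 1))).eq_of_nhds, Dd_const, (Dd_pow hf k).eq_of_nhds]
  push_cast
  ring

theorem Lp_term {e : ι → E} {x : E} {f c : E → ℝ} (hf : AnalyticAt ℝ f x) (hc : AnalyticAt ℝ c x)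
    (k : ℕ) : Lp e (fun y => f y ^ (k + 2) * c y) x =
      ((k : ℝ) + 2) * (k + 1) * f x ^ k * Gr e f x * c x
      + ((k : ℝ) + 2) * f x ^ (k + 1) * (2 * ∑ i, Dd (e i) f x * Dd (e i) c x + Lp e f x * c x)
      + f x ^ (k + 2) * Lp e c x := by
  unfold Lp Gr
  simp only [Finset.mul_sum, Finset.sum_mul, ← Finset.sum_add_distrib]
  refine Finset.sum_congr rfl fun i _ => ?_
  rw [Dd_Dd_mul (hf.fun_pow (k + 2)) hc, Dd_Dd_pow hf k, (Dd_pow hf (k + 1)).eq_of_nhds]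
  push_cast
  ring

theorem Lp_partial {e : ι → E} {x : E} {τ : E → ℝ} (hτ : AnalyticAt ℝ τ x) (hG : Gr e τ x ≠ 0)
    (hc : ∀ k, AnalyticAt ℝ (cs e τ k) x) (m : ℕ) :
    Lp e (fun y => ∑ k ∈ Finset.range (m + 2), τ y ^ k * cs e τ k y) x =
      ((m : ℝ) + 1) * (τ x ^ m * (2 * ∑ i, Dd (e i) τ x * Dd (e i) (cs e τ (m + 1)) x
        + Lp e τ x * cs e τ (m + 1) x)) + τ x ^ (m + 1) * Lp e (cs e τ (m + 1)) x
        + τ x ^ m * Lp e (cs e τ m) x := by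
  induction m with
  | zero =>
    simp [Finset.sum_range_succ, cs, Dd_const, Lp_const]
  | succ m ih =>
    have ha : AnalyticAt ℝ (fun y => ∑ k ∈ Finset.range (m + 2), τ y ^ k * cs e τ k y) x :=
      Finset.analyticAt_fun_sum _ fun k _ => (hτ.pow k).mul (hc k)
    have hb : AnalyticAt ℝ (fun y => τ y ^ (m + 2) * cs e τ (m + 2) y) x :=
      (hτ.pow _).mul (hc _)
    have h1 : (fun y => ∑ k ∈ Finset.range (m + 1 + 2), τ y ^ k * cs e τ k y) =
        fun y => (∑ k ∈ Finset.range (m + 2), τ y ^ k * cs e τ k y)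
          + τ y ^ (m + 2) * cs e τ (m + 2) y := by
      funext y
      rw [Finset.sum_range_succ]
    rw [h1, Lp_add ha hb, ih, Lp_term hτ (hc _)]
    have h2 : ((m : ℝ) + 2) * (m + 1) * Gr e τ x * cs e τ (m + 2) x =
        -(((m : ℝ) + 1) * (2 * ∑ i, Dd (e i) τ x * Dd (e i) (cs e τ (m + 1)) x
          + Lp e τ x * cs e τ (m + 1) x) + Lp e (cs e τ m) x) := by
      rw [cs]
      have a1 : (m : ℝ) + 2 ≠ 0 := by positivity
      have a2 : (m : ℝ) + 1 ≠ 0 := by positivity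
      field_simp
    push_cast
    linear_combination (τ x ^ m) * h2

theorem Cls.lap {p : E} {e : ι → E} (he : ∀ i, ‖e i‖ ≤ 1) {s s' M : ℝ} {f : E → ℝ}
    (hf : Cls p s' M f) (hs : 0 < s) (hss : s < s') :
    Cls p s (Fintype.card ι * (M / ((s' - s) / 2) / ((s' - s) / 2))) (Lp e f) := by
  have hd : ∀ i, Cls p s (M / ((s' - s) / 2) / ((s' - s) / 2)) (Dd (e i) (Dd (e i) f)) := by
    intro i
    have h1 := hf.deriv (s := (s + s') / 2) (by linarith) (by linarith) (he i)
    have h2 := h1.deriv hs (by linarith) (he i)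
    rw [show s' - (s + s') / 2 = (s' - s) / 2 by ring,
      show (s + s') / 2 - s = (s' - s) / 2 by ring] at h2
    exact h2
  have := Cls.sum Finset.univ hs hd
  rw [Finset.sum_const, nsmul_eq_mul, Finset.card_univ] at this
  exact this

theorem exists_cls_eventually {p : E} {f : E → ℝ} (h : AnalyticAt ℝ f p) :
    ∃ M, 0 ≤ M ∧ ∀ᶠ s in nhdsWithin (0 : ℝ) (Set.Ioi 0), Cls p s M f := by
  obtain ⟨s, M, hs⟩ := h.exists_cls
  refine ⟨M, hs.nonneg, ?_⟩
  filter_upwards [Ioc_mem_nhdsGT hs.1] with t ht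
  exact hs.mono ht.1 ht.2 le_rfl

theorem ck {p : E} {e : ι → E} (he : ∀ i, ‖e i‖ ≤ 1) {τ : E → ℝ} (hτ : AnalyticAt ℝ τ p)
    (h0 : τ p = 0) (hG : Gr e τ p ≠ 0) :
    ∃ r > 0, ∃ g : E → ℝ, g p = 1 ∧ (∀ x, ‖x - p‖ < r → AnalyticAt ℝ g x) ∧
      (∀ x, ‖x - p‖ < r → AnalyticAt ℝ τ x) ∧
      ∀ x, ‖x - p‖ < r → Lp e (fun y => τ y * g y) x = 0 := by
  choose B1 hB1 h1 using fun i => exists_cls_eventually (Dd_analytic (e := e i) hτ)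
  obtain ⟨B2, hB2, h2⟩ := exists_cls_eventually (Lp_analytic (e := e) hτ)
  obtain ⟨B3, hB3, h3⟩ := exists_cls_eventually ((Gr_analytic (e := e) hτ).inv hG)
  obtain ⟨Mτ, hMτ, h4⟩ := exists_cls_eventually hτ
  have h5 : ∀ᶠ s in nhdsWithin (0 : ℝ) (Set.Ioi 0), ∀ x, ‖x - p‖ < s → Gr e τ x ≠ 0 := by
    have := (Gr_analytic (e := e) hτ).continuousAt.eventually_ne hG
    obtain ⟨δ, hδ, h⟩ := Metric.eventually_nhds_iff.1 this
    filter_upwards [Ioc_mem_nhdsGT hδ] with t ht x hx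
    exact h (by rw [dist_eq_norm]; exact hx.trans_le ht.2)
  obtain ⟨R, h1, h2, h3, h4, h5, hR0, hR1⟩ := ((eventually_all.2 h1).and (h2.and (h3.and (h4.and
    (h5.and (Ioc_mem_nhdsGT (zero_lt_one (α := ℝ)))))))).exists
  set B := (∑ i, B1 i) + B2 + B3 with hB
  have hsB : 0 ≤ ∑ i, B1 i := Finset.sum_nonneg fun i _ => hB1 i
  have hB0 : 0 ≤ B := by positivity
  have k1 : ∀ i, Cls p R B (Dd (e i) τ) := fun i => (h1 i).mono hR0 le_rfl (by
    have := Finset.single_le_sum (fun i _ => hB1 i) (Finset.mem_univ i)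
    linarith)
  have k2 : Cls p R B (Lp e τ) := h2.mono hR0 le_rfl (by linarith)
  have k3 : Cls p R B (fun x => (Gr e τ x)⁻¹) := h3.mono hR0 le_rfl (by linarith)
  obtain ⟨A, hA⟩ : ∃ A, A = 12 * (Fintype.card ι : ℝ) * B ^ 2 + B ^ 2
    + 27 * (Fintype.card ι : ℝ) * B + 1 := ⟨_, rfl⟩
  have hA0 : 0 ≤ A := by rw [hA]; positivity
  set ρ := A * (R - R / 2)⁻¹ with hρ
  have hρ0 : 0 ≤ ρ := mul_nonneg hA0 (inv_nonneg.2 (by linarith))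
  have hcs : ∀ k, Cls p (R / 2) (ρ ^ k) (cs e τ k) := fun k => by
    rw [hρ, mul_pow]
    exact cs_bound he hR1 hB0 k1 k2 k3 hA k (R / 2) (by linarith) (by linarith)
  set s := min (R / 4) (R / (2 * (Mτ * ρ + 1))) with hs
  have hMρ : 0 ≤ Mτ * ρ := mul_nonneg hMτ hρ0
  have hs0 : 0 < s := lt_min (by linarith) (by positivity)
  have hs4 : s ≤ R / 4 := min_le_left _ _
  set θ := s / R * Mτ with hθ
  have hθ0 : 0 ≤ θ := by positivity
  have hθρ : θ * ρ ≤ 1 / 2 := by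
    have : s ≤ R / (2 * (Mτ * ρ + 1)) := min_le_right _ _
    rw [le_div_iff₀ (by positivity)] at this
    rw [hθ, show s / R * Mτ * ρ = s * (Mτ * ρ) / R by ring, div_le_iff₀ hR0]
    nlinarith
  have hτs : Cls p s θ τ := h4.small h0 hs0 (by linarith)
  have hpow : ∀ k, θ ^ k * ρ ^ k ≤ (1 / 2) ^ k := fun k => by
    rw [← mul_pow]; gcongr
  have hcss : ∀ k, Cls p s (ρ ^ k) (cs e τ k) := fun k => (hcs k).mono hs0 (by linarith) le_rfl
  have hterm : ∀ k, Cls p s ((1 / 2) ^ k) (fun x => τ x ^ k * cs e τ k x) := fun k =>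
    ((hτs.pow k).mul (hcss k)).mono hs0 le_rfl (hpow k)
  have hgeo : Summable fun k : ℕ => (1 / 2 : ℝ) ^ k := summable_geometric_two
  have hgterm : ∀ k, Cls p s (ρ * (1 / 2) ^ k) (fun x => τ x ^ k * cs e τ (k + 1) x) := fun k =>
    ((hτs.pow k).mul (hcss (k + 1))).mono hs0 le_rfl (by
      rw [pow_succ ρ, ← mul_assoc, mul_comm]
      exact mul_le_mul_of_nonneg_left (hpow k) hρ0)
  have hg := Cls.tsum hs0 hgterm (hgeo.mul_left ρ)
  have htail : ∀ m, Cls p s (2 * (1 / 2) ^ m)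
      (fun x => ∑' k, τ x ^ (k + m) * cs e τ (k + m) x) := fun m => by
    have := Cls.tsum hs0 (fun k => hterm (k + m)) ((summable_nat_add_iff m).2 hgeo)
    refine this.mono hs0 le_rfl ?_
    simp only [pow_add]
    rw [tsum_mul_right, tsum_geometric_two]
  have hsx : ∀ x, ‖x - p‖ < s → Summable fun k => τ x ^ k * cs e τ k x := fun x hx =>
    Summable.of_norm_bounded hgeo fun k => (hterm k).abs_le hx
  have hw : ∀ x, ‖x - p‖ < s → τ x * (∑' k, τ x ^ k * cs e τ (k + 1) x) =
      ∑' k, τ x ^ k * cs e τ k x := fun x hx => by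
    rw [(hsx x hx).tsum_eq_zero_add, ← tsum_mul_left]
    simp only [cs, mul_zero, zero_add, pow_succ]
    exact tsum_congr fun k => by ring
  refine ⟨s / 2, by linarith, fun x => ∑' k, τ x ^ k * cs e τ (k + 1) x, ?_, ?_, ?_, ?_⟩
  · beta_reduce
    rw [tsum_eq_single 0]
    · simp [cs]
    · intro k hk
      simp [h0, hk]
  · intro x hx
    exact hg.analyticAt (by linarith)
  · intro x hx
    exact h4.analyticAt (by linarith)
  · intro x hx
    have hxs : ‖x - p‖ < s := by linarith
    have hτx : AnalyticAt ℝ τ x := h4.analyticAt (by linarith)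
    have hcx : ∀ k, AnalyticAt ℝ (cs e τ k) x := fun k => (hcs k).analyticAt (by linarith)
    have hτle : |τ x| ≤ θ := hτs.abs_le hxs
    have key : ∀ m, Lp e (fun y => τ y * ∑' k, τ y ^ k * cs e τ (k + 1) y) x =
        Lp e (fun y => ∑ k ∈ Finset.range m, τ y ^ k * cs e τ k y) x +
          Lp e (fun x => ∑' k, τ x ^ (k + m) * cs e τ (k + m) x) x := fun m => by
      have ha : AnalyticAt ℝ (fun y => ∑ k ∈ Finset.range m, τ y ^ k * cs e τ k y) x :=
        Finset.analyticAt_fun_sum _ fun k _ => (hτx.pow k).mul (hcx k)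
      rw [← Lp_add ha ((htail m).analyticAt hxs)]
      apply Lp_congr
      have : ∀ᶠ y in nhds x, ‖y - p‖ < s := by
        have hc : ContinuousAt (fun y : E => ‖y - p‖) x := by fun_prop
        exact hc.eventually_lt continuousAt_const hxs
      filter_upwards [this] with y hy
      rw [hw y hy, (hsx y hy).sum_add_tsum_nat_add]
    have hprod : ∀ (C : ℝ) (q : ℕ → ℝ), (∀ m, |q m| ≤ C * ρ ^ m) →
        ∀ m, |τ x ^ m * q m| ≤ C * (1 / 2) ^ m := fun C q hq m => by
      have hC : 0 ≤ C := by simpa using (abs_nonneg _).trans (hq 0)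
      rw [abs_mul, abs_pow]
      calc |τ x| ^ m * |q m| ≤ θ ^ m * (C * ρ ^ m) := by
            gcongr
            exact hq m
        _ = C * (θ ^ m * ρ ^ m) := by ring
        _ ≤ _ := by gcongr; exact hpow m
    have hg0 : Tendsto (fun m : ℕ => (1 / 2 : ℝ) ^ m) atTop (nhds 0) :=
      tendsto_pow_atTop_nhds_zero_of_lt_one (by norm_num) (by norm_num)
    have hg1 : Tendsto (fun m : ℕ => (m : ℝ) * (1 / 2 : ℝ) ^ m) atTop (nhds 0) :=
      tendsto_self_mul_const_pow_of_lt_one (by norm_num) (by norm_num)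
    -- the tail
    have t1 : Tendsto (fun m => Lp e (fun x => ∑' k, τ x ^ (k + m) * cs e τ (k + m) x) x)
        atTop (nhds 0) := by
      have hb : ∀ m, _ := fun m =>
        ((htail m).lap he (half_pos hs0) (half_lt_self hs0)).abs_le hx
      refine squeeze_zero_norm hb ?_
      have := hg0.const_mul ((Fintype.card ι : ℝ) * (2 / ((s - s / 2) / 2) / ((s - s / 2) / 2)))
      rw [mul_zero] at this
      refine this.congr fun m => ?_
      ring
    -- the partial sums
    obtain ⟨C1, hC1⟩ : ∃ C, ∀ m, |Lp e (cs e τ m) x| ≤ C * ρ ^ m := by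
      refine ⟨(Fintype.card ι : ℝ) * (1 / ((R / 2 - s) / 2) / ((R / 2 - s) / 2)), fun m => ?_⟩
      refine (((hcs m).lap he hs0 (by linarith)).abs_le hxs).trans (le_of_eq ?_)
      ring
    have hDc : ∀ i m, |Dd (e i) (cs e τ m) x| ≤ 1 / (R / 2 - s) * ρ ^ m := fun i m => by
      refine (((hcs m).deriv hs0 (by linarith) (he i)).abs_le hxs).trans (le_of_eq ?_)
      ring
    have hxR : ‖x - p‖ < R := by linarith
    have hC2 : ∀ m, |2 * ∑ i, Dd (e i) τ x * Dd (e i) (cs e τ m) x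
        + Lp e τ x * cs e τ m x| ≤
          (2 * ((Fintype.card ι : ℝ) * (B * (1 / (R / 2 - s)))) + B) * ρ ^ m := fun m => by
      have a1 : |∑ i, Dd (e i) τ x * Dd (e i) (cs e τ m) x| ≤
          ∑ i : ι, B * (1 / (R / 2 - s) * ρ ^ m) := by
        refine (Finset.abs_sum_le_sum_abs _ _).trans (Finset.sum_le_sum fun i _ => ?_)
        rw [abs_mul]
        exact mul_le_mul ((k1 i).abs_le hxR) (hDc i m) (abs_nonneg _) hB0
      rw [Finset.sum_const, nsmul_eq_mul, Finset.card_univ] at a1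
      have a2 : |Lp e τ x * cs e τ m x| ≤ B * ρ ^ m := by
        rw [abs_mul]
        exact mul_le_mul (k2.abs_le hxR) ((hcss m).abs_le hxs) (abs_nonneg _) hB0
      refine (abs_add_le _ _).trans ?_
      rw [abs_mul, abs_two]
      linarith
    have t2 : Tendsto (fun m => τ x ^ m * Lp e (cs e τ m) x) atTop (nhds 0) := by
      refine squeeze_zero_norm (hprod C1 _ hC1) ?_
      simpa using hg0.const_mul C1
    have t3 : Tendsto (fun m : ℕ => ((m : ℝ) + 1) * (τ x ^ m *
        (2 * ∑ i, Dd (e i) τ x * Dd (e i) (cs e τ (m + 1)) x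
        + Lp e τ x * cs e τ (m + 1) x))) atTop (nhds 0) := by
      obtain ⟨C2, hC2⟩ : ∃ C, ∀ m, |2 * ∑ i, Dd (e i) τ x * Dd (e i) (cs e τ m) x
        + Lp e τ x * cs e τ m x| ≤ C * ρ ^ m := ⟨_, hC2⟩
      have hb := hprod (C2 * ρ) (fun m => 2 * ∑ i, Dd (e i) τ x * Dd (e i) (cs e τ (m + 1)) x
        + Lp e τ x * cs e τ (m + 1) x) (fun m => (hC2 (m + 1)).trans (le_of_eq (by ring)))
      have hlim : Tendsto (fun m : ℕ => C2 * ρ * ((m : ℝ) * (1 / 2) ^ m + (1 / 2) ^ m)) atTop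
          (nhds 0) := by
        simpa using (hg1.add hg0).const_mul (C2 * ρ)
      refine squeeze_zero_norm (fun m => ?_) hlim
      rw [norm_mul, Real.norm_eq_abs, Real.norm_eq_abs, abs_of_pos (by positivity : (0:ℝ) < m + 1)]
      calc _ ≤ ((m : ℝ) + 1) * (C2 * ρ * (1 / 2) ^ m) := by
            gcongr
            exact hb m
        _ = _ := by ring
    have t4 : Tendsto (fun m =>
        Lp e (fun y => ∑ k ∈ Finset.range (m + 2), τ y ^ k * cs e τ k y) x) atTop (nhds 0) := by
      simp only [Lp_partial hτx (h5 x hxR) hcx]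
      simpa using (t3.add ((tendsto_add_atTop_iff_nat 1).2 t2)).add t2
    have t5 := t4.add ((tendsto_add_atTop_iff_nat 2).2 t1)
    simp only [← key] at t5
    simpa using tendsto_nhds_unique tendsto_const_nhds t5

end CK

section Final

variable {n : ℕ}

theorem pxs_eq_Dd (i : Fin n) {f : (Fin n → ℝ) → ℝ} {x : Fin n → ℝ} (hf : DifferentiableAt ℝ f x) :
    pxs i f x = Dd (Pi.single i 1) f x := by
  have h1 := hasDerivAt_update x i (x i)
  have h2 : HasFDerivAt f (fderiv ℝ f x) (Function.update x i (x i)) := by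
    rw [Function.update_eq_self]
    exact hf.hasFDerivAt
  exact (h2.comp_hasDerivAt (x i) h1).deriv

theorem pxs_eventually (i : Fin n) {f : (Fin n → ℝ) → ℝ} {x : Fin n → ℝ} (hf : AnalyticAt ℝ f x) :
    pxs i f =ᶠ[nhds x] Dd (Pi.single i 1) f := by
  filter_upwards [hf.eventually_analyticAt] with y hy
  exact pxs_eq_Dd i hy.differentiableAt

theorem pxs_pxs (i : Fin n) {f : (Fin n → ℝ) → ℝ} {x : Fin n → ℝ} (hf : AnalyticAt ℝ f x) :
    pxs i (pxs i f) x = Dd (Pi.single i 1) (Dd (Pi.single i 1) f) x := by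
  have h := pxs_eventually i hf
  have h2 : AnalyticAt ℝ (pxs i f) x := (Dd_analytic hf).congr h.symm
  rw [pxs_eq_Dd i h2.differentiableAt, (Dd_congr h).eq_of_nhds]

theorem log_analytic {E : Type*} [NormedAddCommGroup E] [NormedSpace ℝ E] {f : E → ℝ} {x : E}
    (hf : AnalyticAt ℝ f x) (h : 0 < f x) : AnalyticAt ℝ (fun y => Real.log (f y)) x :=
  AnalyticAt.comp (g := Real.log) (analyticAt_log h) hf

/-- the logarithm of a positive harmonic function solves the equation -/
theorem log_solution {E : Type} [NormedAddCommGroup E] [NormedSpace ℝ E] {ι : Type*} [Fintype ι]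
    (e : ι → E) {a : ℝ} (ha : a ≠ 0) {u w : E → ℝ} {x : E} (hw : AnalyticAt ℝ w x)
    (hwx : 0 < w x) (hu : u =ᶠ[nhds x] fun y => -a * Real.log (w y)) (hL : Lp e w x = 0) :
    AnalyticAt ℝ u x ∧ ∑ i, Dd (e i) (Dd (e i) u) x = a⁻¹ * ∑ i, (Dd (e i) u x) ^ 2 := by
  have hua : AnalyticAt ℝ u x := (analyticAt_const.mul (log_analytic hw hwx)).congr hu.symm
  refine ⟨hua, ?_⟩
  have h1 : ∀ i, (fun y => w y * Dd (e i) u y) =ᶠ[nhds x] fun y => -a * Dd (e i) w y := by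
    intro i
    filter_upwards [Dd_congr (e := e i) hu, hw.eventually_analyticAt,
      continuousAt_const.eventually_lt hw.continuousAt hwx] with y hy hwa hwy
    rw [hy, Dd, fderiv_const_mul ((log_analytic hwa hwy).differentiableAt), fderiv.log
      hwa.differentiableAt hwy.ne']
    simp only [Dd, ContinuousLinearMap.smul_apply, smul_eq_mul]
    field_simp
  have h2 : ∀ i, w x * Dd (e i) (Dd (e i) u) x + Dd (e i) u x * Dd (e i) w x =
      -a * Dd (e i) (Dd (e i) w) x := by
    intro i
    have h3 := (Dd_congr (e := e i) (h1 i)).eq_of_nhds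
    rw [(Dd_mul hw (Dd_analytic hua)).eq_of_nhds,
      (Dd_mul analyticAt_const (Dd_analytic hw)).eq_of_nhds, Dd_const] at h3
    linarith
  have h4 : ∀ i, Dd (e i) (Dd (e i) u) x =
      a⁻¹ * (Dd (e i) u x) ^ 2 - a / w x * Dd (e i) (Dd (e i) w) x := by
    intro i
    have h3 : w x * Dd (e i) u x = -a * Dd (e i) w x := (h1 i).eq_of_nhds
    have h5 : Dd (e i) w x = -(w x * Dd (e i) u x) / a := by
      field_simp
      linarith
    have h6 := h2 i
    rw [h5] at h6
    field_simp
    field_simp at h6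
    linarith
  simp only [h4]
  rw [Finset.sum_sub_distrib, ← Finset.mul_sum, ← Finset.mul_sum]
  have : ∑ i, Dd (e i) (Dd (e i) w) x = 0 := hL
  rw [this]
  ring

end Final

/-- Singular solutions of the elliptic equation `Δu = a⁻¹ |∇u|²` blowing up
logarithmically along the graph hypersurface `Λ = {x₁ = φ(x₂,…,xₙ)}`. -/
theorem stmt2 {n : ℕ} (a : ℝ) (ha : a ≠ 0)
    (V : Set (Fin n → ℝ)) (hV : IsOpen V)
    (φ : (Fin n → ℝ) → ℝ) (hφ : AnalyticOnNhd ℝ φ V)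
    (p : Fin (n + 1) → ℝ) (hpV : Fin.tail p ∈ V) (hpΛ : p 0 = φ (Fin.tail p)) :
    ∃ U : Set (Fin (n + 1) → ℝ), IsOpen U ∧ p ∈ U ∧
      U ⊆ {x | Fin.tail x ∈ V} ∧
      ∃ v : (Fin (n + 1) → ℝ) → ℝ, AnalyticOnNhd ℝ v U ∧
        (∀ x ∈ U, φ (Fin.tail x) < x 0 →
          ∑ i, pxs i (pxs i (fun y => -a * Real.log (y 0 - φ (Fin.tail y)) + v y)) x =
            a⁻¹ * ∑ i, (pxs i (fun y => -a * Real.log (y 0 - φ (Fin.tail y)) + v y) x) ^ 2) ∧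
        (∀ q ∈ U, q 0 = φ (Fin.tail q) →
          Tendsto (fun x => |(-a * Real.log (x 0 - φ (Fin.tail x)) + v x)|)
            (nhdsWithin q {x | φ (Fin.tail x) < x 0}) atTop) := by
  have hV' : IsOpen {x : Fin (n + 1) → ℝ | Fin.tail x ∈ V} := by
    apply hV.preimage
    exact continuous_pi fun i => continuous_apply _
  set τ : (Fin (n + 1) → ℝ) → ℝ := fun y => y 0 - φ (Fin.tail y) with hτdef
  have hτa : ∀ x : Fin (n + 1) → ℝ, (Fin.tail x : Fin n → ℝ) ∈ V → AnalyticAt ℝ τ x := by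
    intro x hx
    have h1 : AnalyticAt ℝ (fun y : Fin (n + 1) → ℝ => y 0) x :=
      (ContinuousLinearMap.proj (R := ℝ) (φ := fun _ : Fin (n + 1) => ℝ) 0).analyticAt x
    have h2 : AnalyticAt ℝ (fun y : Fin (n + 1) → ℝ => (Fin.tail y : Fin n → ℝ)) x :=
      (ContinuousLinearMap.pi (R := ℝ) fun i : Fin n =>
        ContinuousLinearMap.proj (R := ℝ) (φ := fun _ : Fin (n + 1) => ℝ) i.succ).analyticAt x
    exact h1.sub (AnalyticAt.comp (g := φ) (hφ _ hx) h2)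
  have hτp : τ p = 0 := by simp [hτdef, hpΛ]
  let e : Fin (n + 1) → (Fin (n + 1) → ℝ) := fun i => Pi.single i 1
  have he : ∀ i, ‖e i‖ ≤ 1 := fun i => by simp [e, Pi.norm_single]
  have hG : Gr e τ p ≠ 0 := by
    have h0 : Dd (e 0) τ p = 1 := by
      rw [← pxs_eq_Dd 0 (hτa p hpV).differentiableAt]
      simp [pxs, hτdef]
    have h1 : (Dd (e 0) τ p) ^ 2 ≤ Gr e τ p :=
      Finset.single_le_sum (f := fun i => (Dd (e i) τ p) ^ 2) (fun i _ => sq_nonneg _)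
        (Finset.mem_univ 0)
    rw [h0] at h1
    linarith
  obtain ⟨r, hr, g, hgp, hga, -, hL⟩ := ck he (hτa p hpV) hτp hG
  have hgo : IsOpen (Metric.ball p r ∩ g ⁻¹' Set.Ioi 0) := by
    apply ContinuousOn.isOpen_inter_preimage _ Metric.isOpen_ball isOpen_Ioi
    intro x hx
    exact (hga x (by simpa [dist_eq_norm] using hx)).continuousAt.continuousWithinAt
  have hva : ∀ x ∈ Metric.ball p r ∩ g ⁻¹' Set.Ioi 0,
      AnalyticAt ℝ (fun y => -a * Real.log (g y)) x := fun x hx =>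
    analyticAt_const.mul (log_analytic (hga x (by simpa [dist_eq_norm] using hx.1)) hx.2)
  refine ⟨{x | Fin.tail x ∈ V} ∩ (Metric.ball p r ∩ g ⁻¹' Set.Ioi 0), hV'.inter hgo,
    ⟨hpV, Metric.mem_ball_self hr, by simp [hgp]⟩, Set.inter_subset_left,
    fun y => -a * Real.log (g y), fun x hx => hva x hx.2, ?_, ?_⟩
  · intro x hx hlt
    have hxr : ‖x - p‖ < r := by simpa [dist_eq_norm] using hx.2.1
    have hgx : 0 < g x := hx.2.2
    have hτx : 0 < τ x := by simpa [hτdef] using hlt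
    have hτax := hτa x hx.1
    have hgax := hga x hxr
    have hu : (fun y => -a * Real.log (y 0 - φ (Fin.tail y)) + -a * Real.log (g y)) =ᶠ[nhds x]
        fun y => -a * Real.log (τ y * g y) := by
      filter_upwards [continuousAt_const.eventually_lt hτax.continuousAt hτx, continuousAt_const.eventually_lt hgax.continuousAt hgx]
        with y h1 h2
      rw [Real.log_mul h1.ne' h2.ne', mul_add]
    obtain ⟨hua, heq⟩ := log_solution e ha (hτax.fun_mul hgax) (mul_pos hτx hgx) hu (hL x hxr)
    rw [Finset.sum_congr rfl fun i _ => pxs_pxs i hua,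
      Finset.sum_congr rfl fun i _ => congrArg (· ^ 2) (pxs_eq_Dd i hua.differentiableAt)]
    exact heq
  · intro q hq hq0
    have hτq : τ q = 0 := by simp [hτdef, hq0]
    have h1 : Tendsto τ (nhdsWithin q {x | φ (Fin.tail x) < x 0}) (nhdsWithin 0 (Set.Ioi 0)) := by
      apply tendsto_nhdsWithin_of_tendsto_nhds_of_eventually_within
      · have := (hτa q hq.1).continuousAt.tendsto
        rw [hτq] at this
        exact this.mono_left nhdsWithin_le_nhds
      · filter_upwards [self_mem_nhdsWithin] with x hx
        simpa [hτdef] using hx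
    have h2 : Tendsto (fun x => |a| * -Real.log (τ x))
        (nhdsWithin q {x | φ (Fin.tail x) < x 0}) atTop :=
      (tendsto_neg_atBot_atTop.comp (Real.tendsto_log_nhdsGT_zero.comp h1)).const_mul_atTop
        (abs_pos.2 ha)
    have h3 : Tendsto (fun x => -|(-a * Real.log (g x))|)
        (nhdsWithin q {x | φ (Fin.tail x) < x 0}) (nhds (-|(-a * Real.log (g q))|)) :=
      (hva q hq.2).continuousAt.abs.neg.tendsto.mono_left nhdsWithin_le_nhds
    refine tendsto_atTop_mono (fun x => ?_) (h2.atTop_add h3)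
    have h4 : |a| * -Real.log (τ x) ≤ |(-a * Real.log (τ x))| := by
      rw [abs_mul, abs_neg]
      exact mul_le_mul_of_nonneg_left (neg_le_abs _) (abs_nonneg a)
    have h5 := abs_sub_abs_le_abs_sub (-a * Real.log (τ x)) (-(-a * Real.log (g x)))
    rw [abs_neg, sub_neg_eq_add] at h5
    change _ ≤ |(-a * Real.log (τ x) + -a * Real.log (g x))|
    linarith
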